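/- arXiv:2309.05168 — 2 statements merged into one kernel-verified Lean document; each statement's English description precedes it below -/
import Mathlib

section
/- Assume (A)–(D). Then for every (u₁,…,u_N) ∈ 𝒩_k⁺ and every b ∈ {1,…,B}, the equalities u_{pb−p+1} = u_{pb−p+2} = ⋯ = u_{pb} cannot all hold. Consequently σU ≠ U for every U ∈ 𝒩_k⁺, and no component of an element of 𝒩_k⁺ is 𝓡_{2π/(pk)}-invariant. -/
noncomputable section

open Real MeasureTheory Finset

abbrev Euc (n : ℕ) := EuclideanSpace ℝ (Fin n)

/-- The rotation `R_θ` by angle `θ` in the `(x₁,x₂)`-plane (fixing remaining coordinates). -/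
def rotPt {n : ℕ} (θ : ℝ) (x : Euc n) : Euc n :=
  WithLp.toLp 2 fun i => if (i : ℕ) = 0 then Real.cos θ * x i - Real.sin θ * x ⟨1 % n, Nat.mod_lt 1 i.pos⟩
    else if (i : ℕ) = 1 then Real.sin θ * x ⟨0, i.pos⟩ + Real.cos θ * x i
    else x i

/-- `u` is `𝓡_θ`-invariant on `Ω`, i.e. `u (R_{-θ} x) = u x` on `Ω`. -/
def RotInv {n : ℕ} (θ : ℝ) (Ω : Set (Euc n)) (u : Euc n → ℝ) : Prop :=
  ∀ x ∈ Ω, u (rotPt (-θ) x) = u x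

def IsRadialFn {n : ℕ} (Ω : Set (Euc n)) (u : Euc n → ℝ) : Prop :=
  ∀ x ∈ Ω, ∀ y ∈ Ω, ‖x‖ = ‖y‖ → u x = u y

/-- `Ω` is an open ball or an open annulus centered at the origin. -/
def RadialDomain {n : ℕ} (Ω : Set (Euc n)) : Prop :=
  (∃ R : ℝ, 0 < R ∧ Ω = Metric.ball (0 : Euc n) R) ∨
  (∃ r R : ℝ, 0 < r ∧ r < R ∧ Ω = {x : Euc n | r < ‖x‖ ∧ ‖x‖ < R})

/-- The Laplacian of `u`. -/
def lap {n : ℕ} (u : Euc n → ℝ) (x : Euc n) : ℝ :=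
  ∑ i : Fin n, fderiv ℝ (fun y => fderiv ℝ u y (EuclideanSpace.single i 1)) x
    (EuclideanSpace.single i 1)

/-- The squared `H¹` norm. -/
def H1norm2 {n : ℕ} (Ω : Set (Euc n)) (u : Euc n → ℝ) : ℝ :=
  ∫ x in Ω, (‖fderiv ℝ u x‖ ^ 2 + (u x) ^ 2)

/-- 1-based block cyclic shift `π`. -/
def blockCycle (p : ℕ) (j : ℕ) : ℕ := if j % p = 0 then j + 1 - p else j + 1

/-- Assumptions (A)-(D). -/
def SysAssump (N p B : ℕ) (lam mu : ℕ → ℝ) (beta : ℕ → ℕ → ℝ) : Prop :=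
  p.Prime ∧ N = p * B ∧ 0 < B ∧
  -- (A)
  (∀ b ∈ Finset.Icc 1 B, ∀ i ∈ Finset.Icc (p * b - p + 1) (p * b),
    lam i = lam (p * b) ∧ 0 < lam i) ∧
  -- (B)
  (∀ i ∈ Finset.Icc 1 N, ∀ j ∈ Finset.Icc 1 N, i ≠ j → beta i j = beta j i ∧ beta i j ≤ 0) ∧
  (∀ j ∈ Finset.Icc 1 N, 0 < mu j) ∧
  -- (C)
  (∀ i ∈ Finset.Icc 1 N, ∀ j ∈ Finset.Icc 1 N, i ≠ j →
    beta (blockCycle p i) (blockCycle p j) = beta i j) ∧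
  -- (D)
  (∀ b ∈ Finset.Icc 1 B, ∀ j ∈ Finset.Icc (p * b - p + 1) (p * b),
    mu j + ∑ i ∈ (Finset.Icc (p * b - p + 1) (p * b)).erase j, beta i j ≤ 0)

/-- Classical solution of the system (S). -/
def IsClassicalSolution {n : ℕ} (Ω : Set (Euc n)) (N : ℕ) (lam mu : ℕ → ℝ)
    (beta : ℕ → ℕ → ℝ) (u : ℕ → Euc n → ℝ) : Prop :=
  ∀ j ∈ Finset.Icc 1 N,
    ContDiffOn ℝ 2 (u j) Ω ∧ ContinuousOn (u j) (closure Ω) ∧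
    (∀ x ∈ frontier Ω, u j x = 0) ∧
    (∀ x ∈ Ω, -(lap (u j) x) + lam j * u j x =
      mu j * (u j x) ^ 3 + ∑ m ∈ (Finset.Icc 1 N).erase j, beta j m * u j x * (u m x) ^ 2)


/-- Membership in the Nehari-type set `𝒩ₖ⁺` (1-based indices `1,…,N`). -/
def InNehariPos {n : ℕ} (Ω : Set (Euc n)) (N p k : ℕ) (lam mu : ℕ → ℝ)
    (beta : ℕ → ℕ → ℝ) (u : ℕ → Euc n → ℝ) : Prop :=
  (∀ j ∈ Finset.Icc 1 N,
    ContDiffOn ℝ 1 (u j) (closure Ω) ∧ (∀ x ∈ frontier Ω, u j x = 0) ∧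
    (∃ x ∈ Ω, u j x ≠ 0) ∧
    RotInv (2 * π / k) Ω (u j) ∧
    (∫ x in Ω, (‖fderiv ℝ (u j) x‖ ^ 2 + lam j * (u j x) ^ 2)) =
      mu j * (∫ x in Ω, (max (u j x) 0) ^ 4) +
        ∑ m ∈ (Finset.Icc 1 N).erase j, beta j m * ∫ x in Ω, (u j x) ^ 2 * (u m x) ^ 2) ∧
  (∀ j, 1 ≤ j → j < N → ¬ (p ∣ j) →
    ∀ x ∈ Ω, u (j + 1) x = u j (rotPt (-(2 * π / ((p : ℝ) * k))) x))

theorem rotPt_norm {n : ℕ} (hn : n = 2 ∨ n = 3) (θ : ℝ) (x : Euc n) : ‖rotPt θ x‖ = ‖x‖ := by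
  have h := Real.sin_sq_add_cos_sq θ
  rcases hn with rfl | rfl
  · rw [EuclideanSpace.norm_eq, EuclideanSpace.norm_eq]
    congr 1
    simp [rotPt, Fin.sum_univ_two]
    linear_combination (x 0 ^ 2 + x 1 ^ 2) * h
  · rw [EuclideanSpace.norm_eq, EuclideanSpace.norm_eq]
    congr 1
    simp [rotPt, Fin.sum_univ_three]
    linear_combination (x 0 ^ 2 + x 1 ^ 2) * h

theorem rotPt_neg_rotPt {n : ℕ} (hn : n = 2 ∨ n = 3) (θ : ℝ) (x : Euc n) :
    rotPt (-θ) (rotPt θ x) = x := by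
  have h := Real.sin_sq_add_cos_sq θ
  rcases hn with rfl | rfl
  · ext i
    fin_cases i
    · simp [rotPt]
      linear_combination (x 0) * h
    · simp [rotPt]
      linear_combination (x 1) * h
  · ext i
    fin_cases i
    · simp [rotPt]
      linear_combination (x 0) * h
    · simp [rotPt]
      linear_combination (x 1) * h
    · simp [rotPt]

theorem RadialDomain.rot_mem {n : ℕ} (hn : n = 2 ∨ n = 3) {Ω : Set (Euc n)}
    (hΩ : RadialDomain Ω) (θ : ℝ) {x : Euc n} (hx : x ∈ Ω) : rotPt θ x ∈ Ω := by
  rcases hΩ with ⟨R, _, rfl⟩ | ⟨r, R, _, _, rfl⟩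
  · simpa [rotPt_norm hn] using hx
  · simpa [rotPt_norm hn] using hx

theorem RadialDomain.isOpen {n : ℕ} {Ω : Set (Euc n)} (hΩ : RadialDomain Ω) : IsOpen Ω := by
  rcases hΩ with ⟨R, _, rfl⟩ | ⟨r, R, _, _, rfl⟩
  · exact Metric.isOpen_ball
  · exact (isOpen_lt continuous_const continuous_norm).inter
      (isOpen_lt continuous_norm continuous_const)

theorem RadialDomain.isBounded {n : ℕ} {Ω : Set (Euc n)} (hΩ : RadialDomain Ω) :
    Bornology.IsBounded Ω := by
  rcases hΩ with ⟨R, _, rfl⟩ | ⟨r, R, _, _, rfl⟩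
  · exact Metric.isBounded_ball
  · refine (Metric.isBounded_ball (x := (0 : Euc n)) (r := R)).subset ?_
    intro x hx
    simpa using hx.2

/-- The gradient of a function that is `C¹` up to the boundary is bounded. -/
theorem fderiv_bounded {n : ℕ} {Ω : Set (Euc n)} (ho : IsOpen Ω)
    (hb : Bornology.IsBounded Ω) {v : Euc n → ℝ} (hv : ContDiffOn ℝ 1 v (closure Ω)) :
    ∃ C : ℝ, ∀ x ∈ Ω, ‖fderiv ℝ v x‖ ≤ C := by
  have hc : IsCompact (closure Ω) := hb.isCompact_closure
  have key : ∃ C : ℝ, ∀ x ∈ closure Ω ∩ Ω, ‖fderiv ℝ v x‖ ≤ C := by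
    refine hc.induction_on (p := fun s => ∃ C : ℝ, ∀ x ∈ s ∩ Ω, ‖fderiv ℝ v x‖ ≤ C) ?_ ?_ ?_ ?_
    · exact ⟨0, by simp⟩
    · rintro s t hst ⟨C, hC⟩
      exact ⟨C, fun x hx => hC x ⟨hst hx.1, hx.2⟩⟩
    · rintro s t ⟨C, hC⟩ ⟨D, hD⟩
      refine ⟨max C D, ?_⟩
      rintro x ⟨hx | hx, hxΩ⟩
      · exact (hC x ⟨hx, hxΩ⟩).trans (le_max_left _ _)
      · exact (hD x ⟨hx, hxΩ⟩).trans (le_max_right _ _)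
    · intro x hx
      have h1 : ContDiffWithinAt ℝ ((0 : ℕ) + 1) v (closure Ω) x := by simpa using hv x hx
      obtain ⟨w, hw, -, f', hf', hf'c⟩ := (contDiffWithinAt_succ_iff_hasFDerivWithinAt (by simp)).1 h1
      rw [Set.insert_eq_of_mem hx] at hw
      have hxw : x ∈ w := mem_of_mem_nhdsWithin hx hw
      have hcont : ContinuousWithinAt f' w x := hf'c.continuousWithinAt
      have hev : ∀ᶠ y in nhdsWithin x w, ‖f' y‖ < ‖f' x‖ + 1 :=
        hcont.norm.eventually (gt_mem_nhds (by linarith))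
      have hev2 : {y | ‖f' y‖ < ‖f' x‖ + 1} ∈ nhdsWithin x (closure Ω) :=
        nhdsWithin_le_of_mem hw hev
      obtain ⟨t, hto, hxt, hts⟩ := mem_nhdsWithin.1 (Filter.inter_mem hw hev2)
      refine ⟨t ∩ closure Ω, Filter.inter_mem (mem_nhdsWithin_of_mem_nhds (hto.mem_nhds hxt))
        self_mem_nhdsWithin, ‖f' x‖ + 1, ?_⟩
      rintro y ⟨⟨hyt, hyc⟩, hyΩ⟩
      have hyw := hts ⟨hyt, hyc⟩
      have hwn : w ∈ nhds y := by
        refine Filter.mem_of_superset ((hto.inter ho).mem_nhds ⟨hyt, hyΩ⟩) ?_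
        rintro z ⟨hz1, hz2⟩
        exact (hts ⟨hz1, subset_closure hz2⟩).1
      have : HasFDerivAt v (f' y) y := (hf' y hyw.1).hasFDerivAt hwn
      rw [this.fderiv]
      exact le_of_lt hyw.2
  obtain ⟨C, hC⟩ := key
  exact ⟨C, fun x hx => hC x ⟨subset_closure hx, hx⟩⟩

theorem fderiv_sq_integrableOn {n : ℕ} {Ω : Set (Euc n)} (ho : IsOpen Ω)
    (hb : Bornology.IsBounded Ω) {v : Euc n → ℝ} (hv : ContDiffOn ℝ 1 v (closure Ω)) :
    IntegrableOn (fun x => ‖fderiv ℝ v x‖ ^ 2) Ω := by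
  obtain ⟨C, hC⟩ := fderiv_bounded ho hb hv
  have hcont : ContinuousOn (fun x => ‖fderiv ℝ v x‖ ^ 2) Ω :=
    (((hv.mono subset_closure).continuousOn_fderiv_of_isOpen ho le_rfl).norm).pow 2
  refine IntegrableOn.of_bound hb.measure_lt_top
    (hcont.aestronglyMeasurable ho.measurableSet) (C ^ 2) ?_
  refine (ae_restrict_iff' ho.measurableSet).2 (Filter.Eventually.of_forall fun x hx => ?_)
  rw [Real.norm_of_nonneg (by positivity)]
  exact pow_le_pow_left₀ (norm_nonneg _) (hC x hx) 2

theorem cont_integrableOn {n : ℕ} {Ω : Set (Euc n)}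
    (hb : Bornology.IsBounded Ω) {v : Euc n → ℝ} (hv : ContinuousOn v (closure Ω)) :
    IntegrableOn v Ω :=
  (hv.integrableOn_compact hb.isCompact_closure).mono_set subset_closure

theorem energy_pos {n : ℕ} {Ω : Set (Euc n)} (ho : IsOpen Ω)
    (hb : Bornology.IsBounded Ω) {v : Euc n → ℝ} (hv : ContDiffOn ℝ 1 v (closure Ω))
    (hne : ∃ x ∈ Ω, v x ≠ 0) {l : ℝ} (hl : 0 < l) :
    0 < ∫ x in Ω, (‖fderiv ℝ v x‖ ^ 2 + l * (v x) ^ 2) := by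
  have hcv := hv.continuousOn
  have hi2 : IntegrableOn (fun x => l * (v x) ^ 2) Ω :=
    cont_integrableOn hb (continuousOn_const.mul (hcv.pow 2))
  have hi := (fderiv_sq_integrableOn ho hb hv).add hi2
  have hi' : IntegrableOn (fun x => ‖fderiv ℝ v x‖ ^ 2 + l * (v x) ^ 2) Ω := hi
  rw [setIntegral_pos_iff_support_of_nonneg_ae
    (Filter.Eventually.of_forall fun x => by simp only [Pi.zero_apply]; positivity) hi']
  obtain ⟨x, hx, hvx⟩ := hne
  have hopen : IsOpen (Ω ∩ v ⁻¹' {0}ᶜ) :=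
    (hcv.mono subset_closure).isOpen_inter_preimage ho isOpen_compl_singleton
  refine lt_of_lt_of_le (hopen.measure_pos volume ⟨x, hx, hvx⟩) (measure_mono ?_)
  rintro y ⟨hy, hvy⟩
  refine ⟨?_, hy⟩
  have hvy' : v y ≠ 0 := hvy
  have : 0 < ‖fderiv ℝ v y‖ ^ 2 + l * (v y) ^ 2 := by positivity
  exact this.ne'

theorem block_ne {n : ℕ} (Ω : Set (Euc n)) (hΩ : RadialDomain Ω)
    (N p B : ℕ) (lam mu : ℕ → ℝ) (beta : ℕ → ℕ → ℝ)
    (hassump : SysAssump N p B lam mu beta) (k : ℕ)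
    (u : ℕ → Euc n → ℝ) (hu : InNehariPos Ω N p k lam mu beta u)
    (b : ℕ) (hb : b ∈ Finset.Icc 1 B)
    (heq : ∀ i ∈ Finset.Icc (p * b - p + 1) (p * b), ∀ x ∈ Ω, u i x = u (p * b) x) : False := by
  obtain ⟨hp, hN, hB, hA, hB1, hB2, hC, hD⟩ := hassump
  obtain ⟨hb1, hb2⟩ := Finset.mem_Icc.1 hb
  have hp0 := hp.pos
  have hpb : p ≤ p * b := Nat.le_mul_of_pos_right p hb1
  have hpbN : p * b ≤ N := hN ▸ Nat.mul_le_mul_left p hb2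
  have hsub : Finset.Icc (p * b - p + 1) (p * b) ⊆ Finset.Icc 1 N := by
    intro i hi
    rw [Finset.mem_Icc] at hi ⊢
    omega
  have hj : p * b ∈ Finset.Icc (p * b - p + 1) (p * b) := by
    rw [Finset.mem_Icc]; omega
  have hjN := hsub hj
  have hDj := hD b hb _ hj
  have hAj := (hA b hb _ hj).2
  clear hA hD
  generalize p * b = j at *
  obtain ⟨hcd, -, hne, -, hneh⟩ := hu.1 j hjN
  have ho := hΩ.isOpen
  have hbd := hΩ.isBounded
  have hpos := energy_pos ho hbd hcd hne hAj
  have hcv := hcd.continuousOn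
  set I := ∫ x in Ω, (u j x) ^ 4 with hI
  have hI0 : 0 ≤ I := integral_nonneg fun x => by positivity
  have h1 : (∫ x in Ω, (max (u j x) 0) ^ 4) ≤ I := by
    refine integral_mono (cont_integrableOn hbd ((hcv.sup continuousOn_const).pow 4))
      (cont_integrableOn hbd (hcv.pow 4)) fun x => ?_
    rcases le_total (u j x) 0 with h | h
    · simp only [max_eq_right h]
      have := pow_nonneg (sq_nonneg (u j x)) 2
      nlinarith
    · simp only [max_eq_left h]; exact le_rfl
  set S := Finset.Icc (j - p + 1) j with hS
  have h2 : ∑ m ∈ (Finset.Icc 1 N).erase j, beta j m * ∫ x in Ω, (u j x) ^ 2 * (u m x) ^ 2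
      ≤ ∑ m ∈ S.erase j, beta j m * ∫ x in Ω, (u j x) ^ 2 * (u m x) ^ 2 := by
    rw [← Finset.sum_sdiff (Finset.erase_subset_erase j hsub)]
    have : ∑ m ∈ (Finset.Icc 1 N).erase j \ S.erase j,
        beta j m * ∫ x in Ω, (u j x) ^ 2 * (u m x) ^ 2 ≤ 0 := by
      refine Finset.sum_nonpos fun m hm => ?_
      have hm' := Finset.mem_erase.1 (Finset.mem_sdiff.1 hm).1
      exact mul_nonpos_of_nonpos_of_nonneg (hB1 j hjN m hm'.2 hm'.1.symm).2
        (integral_nonneg fun x => by positivity)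
    linarith
  have h3 : ∑ m ∈ S.erase j, beta j m * ∫ x in Ω, (u j x) ^ 2 * (u m x) ^ 2
      = (∑ m ∈ S.erase j, beta m j) * I := by
    rw [Finset.sum_mul]
    refine Finset.sum_congr rfl fun m hm => ?_
    have hm' := Finset.mem_erase.1 hm
    rw [(hB1 j hjN m (hsub hm'.2) hm'.1.symm).1]
    congr 1
    refine setIntegral_congr_fun ho.measurableSet fun x hx => ?_
    simp only [heq m hm'.2 x hx]
    ring
  have h4 := mul_le_mul_of_nonneg_left h1 (hB2 j hjN).le
  have h5 := mul_nonpos_of_nonpos_of_nonneg hDj hI0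
  linarith

/-- If consecutive members of a block coincide then the whole block is constant. -/
theorem block_const {n : ℕ} {Ω : Set (Euc n)} {u : ℕ → Euc n → ℝ} {a e : ℕ}
    (h : ∀ i, a ≤ i → i < e → ∀ x ∈ Ω, u (i + 1) x = u i x) :
    ∀ i ∈ Finset.Icc a e, ∀ x ∈ Ω, u i x = u e x := by
  intro i hi x hx
  obtain ⟨h1, h2⟩ := Finset.mem_Icc.1 hi
  have key : ∀ m, i ≤ m → m ≤ e → u m x = u i x := by
    intro m hm
    induction m, hm using Nat.le_induction with
    | base => intro _; rfl
    | succ m hm ih =>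
      intro hme
      rw [h m (h1.trans hm) hme x hx, ih (by omega)]
  exact (key e h2 le_rfl).symm

theorem block_not_dvd {p b i : ℕ} (hb : 1 ≤ b) (h1 : p * b - p + 1 ≤ i)
    (h2 : i < p * b) : ¬ p ∣ i := by
  rintro ⟨c, rfl⟩
  obtain ⟨d, rfl⟩ : ∃ d, b = d + 1 := ⟨b - 1, by omega⟩
  have h3 : c < d + 1 := lt_of_mul_lt_mul_left h2 (Nat.zero_le p)
  have h4 : p * c ≤ p * d := Nat.mul_le_mul_left p (by omega)
  rw [Nat.mul_add] at h1
  omega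

/-- Lemma 2.3 of the paper. On `𝒩ₖ⁺` no block of `p` consecutive
components can consist of equal functions; consequently `σU ≠ U` on `𝒩ₖ⁺` and no
component of an element of `𝒩ₖ⁺` is `𝓡_{2π/(pk)}`-invariant. -/
theorem no_fixed_point_on_nehari
    {n : ℕ} (hn : n = 2 ∨ n = 3) (Ω : Set (Euc n)) (hΩ : RadialDomain Ω)
    (N p B : ℕ) (lam mu : ℕ → ℝ) (beta : ℕ → ℕ → ℝ)
    (hassump : SysAssump N p B lam mu beta)
    (k : ℕ) (hk : 1 ≤ k)
    (u : ℕ → Euc n → ℝ) (hu : InNehariPos Ω N p k lam mu beta u) :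
    (∀ b ∈ Finset.Icc 1 B,
      ¬ (∀ i ∈ Finset.Icc (p * b - p + 1) (p * b), ∀ x ∈ Ω, u i x = u (p * b) x)) ∧
    ¬ (∀ j ∈ Finset.Icc 1 N, ∀ x ∈ Ω, u (blockCycle p j) x = u j x) ∧
    (∀ j ∈ Finset.Icc 1 N, ¬ RotInv (2 * π / ((p : ℝ) * k)) Ω (u j)) := by
  have hp := hassump.1
  have hN := hassump.2.1
  have hB := hassump.2.2.1
  have main := block_ne Ω hΩ N p B lam mu beta hassump k u hu
  refine ⟨main, ?_, ?_⟩
  · intro h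
    refine main 1 (Finset.mem_Icc.2 ⟨le_rfl, hB⟩) (block_const fun i hi1 hi2 x hx => ?_)
    have hd := block_not_dvd le_rfl hi1 hi2
    have hle : p * 1 ≤ N := hN ▸ Nat.mul_le_mul_left p hB
    have := h i (Finset.mem_Icc.2 ⟨by omega, by omega⟩) x hx
    rwa [blockCycle, if_neg (fun h0 => hd (Nat.dvd_of_mod_eq_zero h0))] at this
  · intro j hj hinv
    obtain ⟨hj1, hj2⟩ := Finset.mem_Icc.1 hj
    have hp0 := hp.pos
    -- the block containing `j`
    obtain ⟨b, hb1, hb2, hjb1, hjb2⟩ :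
        ∃ b, 1 ≤ b ∧ b ≤ B ∧ p * b - p + 1 ≤ j ∧ j ≤ p * b := by
      refine ⟨(j - 1) / p + 1, Nat.le_add_left _ _, ?_, ?_, ?_⟩
      · have : (j - 1) / p < B := by
          rw [Nat.div_lt_iff_lt_mul hp0, Nat.mul_comm, ← hN]; omega
        omega
      · have := Nat.mul_div_le (j - 1) p
        rw [Nat.mul_add]; omega
      · have := Nat.lt_mul_div_succ (j - 1) hp0
        omega
    have hle : p * b ≤ N := hN ▸ Nat.mul_le_mul_left p hb2
    set α := 2 * π / ((p : ℝ) * k) with hα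
    have hstep : ∀ i, p * b - p + 1 ≤ i → i < p * b → ∀ x ∈ Ω,
        u (i + 1) x = u i (rotPt (-α) x) := fun i hi1 hi2 =>
      hu.2 i (by omega) (by omega) (block_not_dvd hb1 hi1 hi2)
    have hrot : ∀ θ : ℝ, ∀ x ∈ Ω, rotPt θ x ∈ Ω := fun θ x hx => hΩ.rot_mem hn θ hx
    have hup : ∀ i, j ≤ i → i ≤ p * b → RotInv α Ω (u i) := by
      intro i hi
      induction i, hi using Nat.le_induction with
      | base => intro _; exact hinv
      | succ m hm ih =>
        intro hme x hx
        rw [hstep m (hjb1.trans hm) hme _ (hrot _ x hx), hstep m (hjb1.trans hm) hme x hx]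
        exact ih (by omega) _ (hrot _ x hx)
    have hdown : ∀ d i, i + d = j → p * b - p + 1 ≤ i → RotInv α Ω (u i) := by
      intro d
      induction d with
      | zero => intro i hi _; obtain rfl : i = j := by omega
                exact hinv
      | succ d ih =>
        intro i hi hi1 y hy
        have h1 := ih (i + 1) (by omega) (by omega) (rotPt α y) (hrot _ y hy)
        rw [hstep i hi1 (by omega) _ (hrot _ _ (hrot _ y hy)),
          hstep i hi1 (by omega) _ (hrot _ y hy), rotPt_neg_rotPt hn] at h1
        exact h1
    refine main b (Finset.mem_Icc.2 ⟨hb1, hb2⟩) (block_const fun i hi1 hi2 x hx => ?_)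
    rw [hstep i hi1 hi2 x hx]
    rcases le_total j i with h | h
    · exact hup i h hi2.le x hx
    · exact hdown (j - i) i (by omega) hi1 x hx


end
end

section
/- Assume β < 0. Let û ∈ C²(Ω) ∩ C¹(Ω̄) satisfy −Δ_k û(x) + û(x) = û(x)³ + β û(x) û(−x)² for all x ∈ Ω. If for every H ∈ ℋ₀ the polarization û_H also belongs to C²(Ω) ∩ C¹(Ω̄) and satisfies the same equation pointwise in Ω, then û is foliated Schwarz symmetric with respect to some unit vector e. -/
noncomputable section

open Real MeasureTheory Finset

/-- Reflection across the hyperplane through `0` with unit normal `a`. -/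
def reflH {n : ℕ} (a : Euc n) (x : Euc n) : Euc n := x - (2 * (inner ℝ a x : ℝ)) • a

/-- The polarization `u_H` of `u` with respect to the closed half-space
`H = {x | 0 ≤ ⟪a, x⟫}`. -/
def polr {n : ℕ} (a : Euc n) (u : Euc n → ℝ) (x : Euc n) : ℝ :=
  if 0 ≤ (inner ℝ a x : ℝ) then max (u x) (u (reflH a x)) else min (u x) (u (reflH a x))

/-- The angular derivative `∂_θ u = x₁ ∂₂ u − x₂ ∂₁ u`. -/
def angDeriv (u : Euc 2 → ℝ) (x : Euc 2) : ℝ :=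
  x 0 * fderiv ℝ u x (EuclideanSpace.single 1 1) - x 1 * fderiv ℝ u x (EuclideanSpace.single 0 1)

/-- The operator `Δ_k u = Δu + (k²−1)|x|^{−2} ∂_θ² u`. -/
def lapk (k : ℕ) (u : Euc 2 → ℝ) (x : Euc 2) : ℝ :=
  lap u x + ((k : ℝ) ^ 2 - 1) / ‖x‖ ^ 2 * angDeriv (angDeriv u) x

/-- `u` is foliated Schwarz symmetric with respect to the unit vector `e`: on each sphere
`u(x)` depends only on the angle between `x` and `e` and is non-increasing in this angle. -/
def FoliatedSchwarz (Ω : Set (Euc 2)) (u : Euc 2 → ℝ) (e : Euc 2) : Prop :=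
  ‖e‖ = 1 ∧ ∀ x ∈ Ω, ∀ y ∈ Ω, ‖x‖ = ‖y‖ → (inner ℝ e y : ℝ) ≤ (inner ℝ e x : ℝ) → u y ≤ u x

/-! ### One-dimensional representation of `Δ_k` -/

/-- Second derivative at `0`. -/
def dd (f : ℝ → ℝ) : ℝ := iteratedDeriv 2 f 0

lemma dd_eq (f : ℝ → ℝ) : dd f = deriv (deriv f) 0 := by
  unfold dd
  rw [iteratedDeriv_succ, iteratedDeriv_one]

/-- The rotation vector field. -/
def Jv (x : Euc 2) : Euc 2 :=
  x 0 • EuclideanSpace.single (1 : Fin 2) (1 : ℝ) - x 1 • EuclideanSpace.single (0 : Fin 2) (1 : ℝ)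

/-- The rotation flow. -/
def rotc (x : Euc 2) (t : ℝ) : Euc 2 :=
  (Real.cos t * x 0 - Real.sin t * x 1) • EuclideanSpace.single (0 : Fin 2) (1 : ℝ)
   + (Real.sin t * x 0 + Real.cos t * x 1) • EuclideanSpace.single (1 : Fin 2) (1 : ℝ)

/-- The straight line flow. -/
def linec (i : Fin 2) (x : Euc 2) (t : ℝ) : Euc 2 :=
  x + t • EuclideanSpace.single i (1 : ℝ)

lemma rotc_zero (x : Euc 2) : rotc x 0 = x := by
  ext i
  fin_cases i <;> simp [rotc]

lemma linec_zero (i : Fin 2) (x : Euc 2) : linec i x 0 = x := by simp [linec]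

lemma rotc_contDiff (x : Euc 2) : ContDiff ℝ 2 (rotc x) := by
  unfold rotc
  fun_prop

lemma linec_contDiff (i : Fin 2) (x : Euc 2) : ContDiff ℝ 2 (linec i x) := by
  unfold linec
  fun_prop

lemma rotc_hasDeriv (x : Euc 2) (t : ℝ) : HasDerivAt (rotc x) (Jv (rotc x t)) t := by
  have h0 : HasDerivAt (fun t => Real.cos t * x 0 - Real.sin t * x 1)
      (-Real.sin t * x 0 - Real.cos t * x 1) t :=
    ((Real.hasDerivAt_cos t).mul_const _).sub ((Real.hasDerivAt_sin t).mul_const _)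
  have h1 : HasDerivAt (fun t => Real.sin t * x 0 + Real.cos t * x 1)
      (Real.cos t * x 0 + -Real.sin t * x 1) t :=
    ((Real.hasDerivAt_sin t).mul_const _).add ((Real.hasDerivAt_cos t).mul_const _)
  have := (h0.smul_const (EuclideanSpace.single (0 : Fin 2) (1 : ℝ))).add
    (h1.smul_const (EuclideanSpace.single (1 : Fin 2) (1 : ℝ)))
  refine this.congr_deriv ?_
  ext i
  fin_cases i <;> simp [rotc, Jv] <;> ring

lemma linec_hasDeriv (i : Fin 2) (x : Euc 2) (t : ℝ) :
    HasDerivAt (linec i x) (EuclideanSpace.single i (1 : ℝ)) t := by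
  have := ((hasDerivAt_id t).smul_const (EuclideanSpace.single i (1 : ℝ) : Euc 2)).const_add x
  rw [one_smul] at this
  exact this

lemma dd_flow (g : Euc 2 → ℝ) (c : ℝ → Euc 2) (X : Euc 2 → Euc 2)
    (hX : Differentiable ℝ X) (hc : ∀ t, HasDerivAt c (X (c t)) t)
    (hg : ContDiffAt ℝ 2 g (c 0)) :
    dd (fun t => g (c t)) = fderiv ℝ (fun y => fderiv ℝ g y (X y)) (c 0) (X (c 0)) := by
  rw [dd_eq]
  have hcc : ContinuousAt c 0 := (hc 0).continuousAt
  have h1 : ∀ᶠ y in nhds (c 0), DifferentiableAt ℝ g y := by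
    have := hg.eventually (by simp)
    filter_upwards [this] with y hy
    exact hy.differentiableAt (by simp)
  have h2 : deriv (fun t => g (c t)) =ᶠ[nhds 0] fun t => fderiv ℝ g (c t) (X (c t)) := by
    filter_upwards [hcc.eventually h1] with t ht
    exact (ht.hasFDerivAt.comp_hasDerivAt t (hc t)).deriv
  rw [h2.deriv_eq]
  have h3 : DifferentiableAt ℝ (fun y => fderiv ℝ g y (X y)) (c 0) := by
    have : DifferentiableAt ℝ (fderiv ℝ g) (c 0) :=
      (hg.fderiv_right (m := 1) (by norm_num)).differentiableAt (by simp)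
    exact this.clm_apply (hX _)
  exact (h3.hasFDerivAt.comp_hasDerivAt 0 (hc 0)).deriv

lemma Jv_diff : Differentiable ℝ Jv := by
  unfold Jv
  fun_prop

lemma angDeriv_eq (g : Euc 2 → ℝ) (x : Euc 2) : angDeriv g x = fderiv ℝ g x (Jv x) := by
  simp [angDeriv, Jv]

lemma lapk_formula (k : ℕ) (g : Euc 2 → ℝ) (x : Euc 2) (hg : ContDiffAt ℝ 2 g x) :
    lapk k g x = dd (fun t => g (linec 0 x t)) + dd (fun t => g (linec 1 x t))
      + ((k : ℝ) ^ 2 - 1) / ‖x‖ ^ 2 * dd (fun t => g (rotc x t)) := by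
  have hl : ∀ i : Fin 2, dd (fun t => g (linec i x t)) =
      fderiv ℝ (fun y => fderiv ℝ g y (EuclideanSpace.single i 1)) x
        (EuclideanSpace.single i 1) := by
    intro i
    have := dd_flow g (linec i x) (fun _ => EuclideanSpace.single i 1)
      (differentiable_const _) (linec_hasDeriv i x) (by rwa [linec_zero])
    rwa [linec_zero] at this
  have hr := dd_flow g (rotc x) Jv Jv_diff (rotc_hasDeriv x) (by rwa [rotc_zero])
  rw [rotc_zero] at hr
  have ha : angDeriv g = fun y => fderiv ℝ g y (Jv y) := funext (angDeriv_eq g)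
  rw [lapk, lap, Fin.sum_univ_two, hl, hl, hr, angDeriv_eq, ha]

lemma comp_line {g : Euc 2 → ℝ} {x : Euc 2} (hg : ContDiffAt ℝ 2 g x) (i : Fin 2) :
    ContDiffAt ℝ ((2 : ℕ) : WithTop ℕ∞) (fun t => g (linec i x t)) 0 := by
  have : ContDiffAt ℝ 2 g (linec i x 0) := by rwa [linec_zero]
  exact this.comp (0 : ℝ) (linec_contDiff i x).contDiffAt

lemma comp_rot {g : Euc 2 → ℝ} {x : Euc 2} (hg : ContDiffAt ℝ 2 g x) :
    ContDiffAt ℝ ((2 : ℕ) : WithTop ℕ∞) (fun t => g (rotc x t)) 0 := by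
  have : ContDiffAt ℝ 2 g (rotc x 0) := by rwa [rotc_zero]
  exact this.comp (0 : ℝ) (rotc_contDiff x).contDiffAt

lemma lapk_sub (k : ℕ) {f g : Euc 2 → ℝ} {x : Euc 2} (hf : ContDiffAt ℝ 2 f x)
    (hg : ContDiffAt ℝ 2 g x) :
    lapk k (fun y => f y - g y) x = lapk k f x - lapk k g x := by
  rw [lapk_formula k _ x (hf.sub hg), lapk_formula k f x hf, lapk_formula k g x hg]
  unfold dd
  rw [iteratedDeriv_fun_sub (comp_line hf 0) (comp_line hg 0),
    iteratedDeriv_fun_sub (comp_line hf 1) (comp_line hg 1),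
    iteratedDeriv_fun_sub (comp_rot hf) (comp_rot hg)]
  ring

lemma lapk_const_mul (k : ℕ) {f : Euc 2 → ℝ} {x : Euc 2} (hf : ContDiffAt ℝ 2 f x) (c : ℝ) :
    lapk k (fun y => c * f y) x = c * lapk k f x := by
  rw [lapk_formula k _ x (contDiffAt_const.mul hf), lapk_formula k f x hf]
  unfold dd
  rw [iteratedDeriv_const_mul_field, iteratedDeriv_const_mul_field, iteratedDeriv_const_mul_field]
  ring

lemma lapk_neg (k : ℕ) {f : Euc 2 → ℝ} {x : Euc 2} (hf : ContDiffAt ℝ 2 f (-x)) :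
    lapk k (fun y => f (-y)) x = lapk k f (-x) := by
  have hf' : ContDiffAt ℝ 2 (fun y => f (-y)) x := hf.comp x contDiff_neg.contDiffAt
  rw [lapk_formula k _ x hf', lapk_formula k f (-x) hf, norm_neg]
  have hl : ∀ i : Fin 2, dd (fun t => f (-(linec i x t))) = dd (fun t => f (linec i (-x) t)) := by
    intro i
    have : (fun t => f (-(linec i x t))) = fun t => (fun s => f (linec i (-x) s)) (-t) := by
      funext t
      simp only [linec]
      congr 1
      rw [neg_smul, neg_add]
    unfold dd
    rw [this, iteratedDeriv_comp_neg 2 (fun s => f (linec i (-x) s))]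
    simp
  have hr : (fun t => f (-(rotc x t))) = fun t => f (rotc (-x) t) := by
    funext t
    congr 1
    ext i
    fin_cases i <;> simp [rotc] <;> ring
  rw [hl, hl, hr]

lemma lapk_congr (k : ℕ) {f g : Euc 2 → ℝ} {x : Euc 2} (h : f =ᶠ[nhds x] g) :
    lapk k f x = lapk k g x := by
  have h1 : ∀ v : Euc 2, (fun y => fderiv ℝ f y v) =ᶠ[nhds x] fun y => fderiv ℝ g y v := by
    intro v
    filter_upwards [h.fderiv (𝕜 := ℝ)] with y hy
    rw [hy]
  have h2 : angDeriv f =ᶠ[nhds x] angDeriv g := by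
    filter_upwards [h.fderiv (𝕜 := ℝ)] with y hy
    rw [angDeriv, angDeriv, hy]
  have h3 : angDeriv (angDeriv f) x = angDeriv (angDeriv g) x := by
    rw [angDeriv, angDeriv, h2.fderiv_eq]
  rw [lapk, lapk, h3, lap, lap]
  congr 1
  refine Finset.sum_congr rfl fun i _ => ?_
  rw [(h1 _).fderiv_eq]

lemma dd_nonneg {f : ℝ → ℝ} (hf : ContinuousAt f 0) (hm : IsLocalMin f 0) : 0 ≤ dd f := by
  rw [dd_eq]
  by_contra hneg
  push Not at hneg
  have hM := isLocalMax_of_deriv_deriv_neg hneg hm.deriv_eq_zero hf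
  have hc : f =ᶠ[nhds 0] fun _ => f 0 := by
    filter_upwards [hm, hM] with t h1 h2
    exact le_antisymm h2 h1
  have : deriv f =ᶠ[nhds 0] fun _ => 0 := by
    have := hc.deriv
    simpa using this
  rw [this.deriv_eq] at hneg
  simp at hneg

lemma lapk_nonneg_of_min (k : ℕ) (hk : 1 ≤ k) {g : Euc 2 → ℝ} {x : Euc 2}
    (hg : ContDiffAt ℝ 2 g x) (hm : IsLocalMin g x) : 0 ≤ lapk k g x := by
  rw [lapk_formula k g x hg]
  have key : ∀ c : ℝ → Euc 2, c 0 = x → Continuous c → 0 ≤ dd (fun t => g (c t)) := by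
    intro c h0 hc
    subst h0
    refine dd_nonneg (ContinuousAt.comp (f := c) (g := g) hg.continuousAt hc.continuousAt) ?_
    have := hc.continuousAt.eventually (p := fun y => g (c 0) ≤ g y) hm
    exact this
  have h0 := key (linec 0 x) (linec_zero _ _) (linec_contDiff 0 x).continuous
  have h1 := key (linec 1 x) (linec_zero _ _) (linec_contDiff 1 x).continuous
  have h2 := key (rotc x) (rotc_zero _) (rotc_contDiff x).continuous
  have hk' : (1 : ℝ) ≤ (k : ℝ) ^ 2 := one_le_pow₀ (by exact_mod_cast hk)
  have : 0 ≤ ((k : ℝ) ^ 2 - 1) / ‖x‖ ^ 2 := div_nonneg (by linarith) (by positivity)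
  have := mul_nonneg this h2
  linarith

/-! ### The barrier -/

/-- Barrier function. -/
def barr (α K : ℝ) (p : Euc 2) (y : Euc 2) : ℝ := Real.exp (-α * ‖y - p‖ ^ 2) - K

lemma barr_contDiff (α K : ℝ) (p : Euc 2) : ContDiff ℝ 2 (barr α K p) := by
  unfold barr
  have : ContDiff ℝ 2 (fun y : Euc 2 => ‖y - p‖ ^ 2) := (contDiff_id.sub contDiff_const).norm_sq ℝ
  fun_prop

lemma dd_exp (α K : ℝ) (q q1 : ℝ → ℝ) (q2 : ℝ) (h : ∀ t, HasDerivAt q (q1 t) t)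
    (h1 : HasDerivAt q1 q2 0) :
    dd (fun t => Real.exp (-α * q t) - K) =
      Real.exp (-α * q 0) * (α ^ 2 * (q1 0) ^ 2 - α * q2) := by
  rw [dd_eq]
  have hd : ∀ t, HasDerivAt (fun t => Real.exp (-α * q t) - K)
      (Real.exp (-α * q t) * (-α * q1 t)) t := by
    intro t
    exact (((h t).const_mul (-α)).exp).sub_const K
  have : deriv (fun t => Real.exp (-α * q t) - K) =
      fun t => Real.exp (-α * q t) * (-α * q1 t) := funext fun t => (hd t).deriv
  rw [this]
  have h3 := (((h 0).const_mul (-α)).exp).mul (h1.const_mul (-α))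
  refine h3.deriv.trans ?_
  ring

lemma nsq (y : Euc 2) : ‖y‖ ^ 2 = y 0 ^ 2 + y 1 ^ 2 := by
  rw [EuclideanSpace.norm_sq_eq, Fin.sum_univ_two]
  simp

lemma lapk_barr (k : ℕ) (α K : ℝ) (p x : Euc 2) :
    lapk k (barr α K p) x = Real.exp (-α * ‖x - p‖ ^ 2) *
      (4 * α ^ 2 * ‖x - p‖ ^ 2 - 4 * α + ((k : ℝ) ^ 2 - 1) / ‖x‖ ^ 2 *
        (4 * α ^ 2 * (x 1 * p 0 - x 0 * p 1) ^ 2 - 2 * α * (x 0 * p 0 + x 1 * p 1))) := by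
  rw [lapk_formula k _ x (barr_contDiff α K p).contDiffAt]
  have e0 : dd (fun t => barr α K p (linec 0 x t)) =
      Real.exp (-α * ‖x - p‖ ^ 2) * (α ^ 2 * (2 * (x 0 - p 0)) ^ 2 - α * 2) := by
    have := dd_exp α K (fun t => ‖linec 0 x t - p‖ ^ 2) (fun t => 2 * (x 0 + t - p 0)) 2 (by
      intro t
      have hq : (fun t => ‖linec 0 x t - p‖ ^ 2) =
          fun t => (x 0 + t - p 0) ^ 2 + (x 1 - p 1) ^ 2 := by
        funext t
        rw [nsq]
        simp [linec]
      rw [hq]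
      have := ((((hasDerivAt_id t).const_add (x 0)).sub_const (p 0)).pow 2).add_const
        ((x 1 - p 1) ^ 2)
      refine this.congr_deriv ?_
      simp) (by
      have := ((((hasDerivAt_id (0 : ℝ)).const_add (x 0)).sub_const (p 0)).const_mul 2)
      refine this.congr_deriv ?_
      simp)
    simpa only [barr, linec_zero, add_zero] using this
  have e1 : dd (fun t => barr α K p (linec 1 x t)) =
      Real.exp (-α * ‖x - p‖ ^ 2) * (α ^ 2 * (2 * (x 1 - p 1)) ^ 2 - α * 2) := by
    have := dd_exp α K (fun t => ‖linec 1 x t - p‖ ^ 2) (fun t => 2 * (x 1 + t - p 1)) 2 (by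
      intro t
      have hq : (fun t => ‖linec 1 x t - p‖ ^ 2) =
          fun t => (x 1 + t - p 1) ^ 2 + (x 0 - p 0) ^ 2 := by
        funext t
        rw [nsq]
        simp [linec]
        ring
      rw [hq]
      have := ((((hasDerivAt_id t).const_add (x 1)).sub_const (p 1)).pow 2).add_const
        ((x 0 - p 0) ^ 2)
      refine this.congr_deriv ?_
      simp) (by
      have := ((((hasDerivAt_id (0 : ℝ)).const_add (x 1)).sub_const (p 1)).const_mul 2)
      refine this.congr_deriv ?_
      simp)
    simpa only [barr, linec_zero, add_zero] using this
  have er : dd (fun t => barr α K p (rotc x t)) =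
      Real.exp (-α * ‖x - p‖ ^ 2) * (α ^ 2 * (2 * (x 1 * p 0 - x 0 * p 1)) ^ 2
        - α * (2 * (x 0 * p 0 + x 1 * p 1))) := by
    have hs := fun t => Real.hasDerivAt_sin t
    have hc := fun t => Real.hasDerivAt_cos t
    have := dd_exp α K (fun t => ‖rotc x t - p‖ ^ 2)
      (fun t => -2 * (x 0 * p 0 + x 1 * p 1) * -Real.sin t
        + 2 * (x 1 * p 0 - x 0 * p 1) * Real.cos t) (2 * (x 0 * p 0 + x 1 * p 1)) (by
      intro t
      have hq : (fun t => ‖rotc x t - p‖ ^ 2) =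
          fun t => -2 * (x 0 * p 0 + x 1 * p 1) * Real.cos t
            + 2 * (x 1 * p 0 - x 0 * p 1) * Real.sin t + (x 0 ^ 2 + x 1 ^ 2 + p 0 ^ 2 + p 1 ^ 2) := by
        funext t
        rw [nsq]
        simp [rotc]
        linear_combination (x 0 ^ 2 + x 1 ^ 2) * Real.sin_sq_add_cos_sq t
      rw [hq]
      exact (((hc t).const_mul _).add ((hs t).const_mul _)).add_const _) (by
      have := (((hs 0).neg.const_mul (-2 * (x 0 * p 0 + x 1 * p 1)))).add
        ((hc 0).const_mul (2 * (x 1 * p 0 - x 0 * p 1)))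
      refine this.congr_deriv ?_
      simp)
    simpa only [barr, rotc_zero, Real.sin_zero, Real.cos_zero, neg_zero, mul_zero, zero_add, mul_one]
      using this
  rw [e0, e1, er]
  have := nsq (x - p)
  simp only [PiLp.sub_apply] at this
  have h4 : 4 * α ^ 2 * ‖x - p‖ ^ 2 = 4 * α ^ 2 * ((x 0 - p 0) ^ 2 + (x 1 - p 1) ^ 2) := by
    rw [this]
  rw [h4]
  ring

/-! ### Strong maximum principle -/

set_option maxHeartbeats 2000000 in
lemma pos_ball (k : ℕ) (hk : 1 ≤ k) (s : Euc 2 → ℝ) (p : Euc 2) (ρ C : ℝ) (hρ : 0 < ρ)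
    (hρp : ρ < ‖p‖) (hC : 0 ≤ C)
    (hs : ∀ x ∈ Metric.closedBall p ρ, ContDiffAt ℝ 2 s x)
    (hs0 : ∀ x ∈ Metric.closedBall p ρ, 0 ≤ s x)
    (hL : ∀ x ∈ Metric.closedBall p ρ, lapk k s x ≤ C * s x)
    (hp : 0 < s p) : ∀ x ∈ Metric.ball p ρ, 0 < s x := by
  have hpm : p ∈ Metric.closedBall p ρ := Metric.mem_closedBall_self hρ.le
  obtain ⟨ρ0, hρ0, hball⟩ : ∃ ρ0 > 0, ∀ x ∈ Metric.ball p ρ0, s p / 2 < s x := by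
    have : ∀ᶠ x in nhds p, s p / 2 < s x :=
      (hs p hpm).continuousAt.eventually (lt_mem_nhds (by linarith))
    obtain ⟨r, hr, h⟩ := Metric.eventually_nhds_iff_ball.1 this
    exact ⟨r, hr, h⟩
  set δ := s p / 2 with hδ
  have hδ0 : 0 < δ := by positivity
  set m := ‖p‖ - ρ with hm
  have hm0 : 0 < m := by linarith
  have hk' : 0 ≤ (k : ℝ) ^ 2 - 1 := by
    have : (1 : ℝ) ≤ (k : ℝ) ^ 2 := one_le_pow₀ (by exact_mod_cast hk)
    linarith
  set B := 4 + 2 * (((k : ℝ) ^ 2 - 1) * (‖p‖ / m)) with hB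
  set α := (C + 1 + B) / (4 * ρ0 ^ 2) + 1 with hα
  have hB0 : 0 ≤ B := by positivity
  have hα1 : 1 ≤ α := by
    have : 0 ≤ (C + 1 + B) / (4 * ρ0 ^ 2) := by positivity
    linarith
  have hα2 : C + 1 + B ≤ 4 * α * ρ0 ^ 2 := by
    have : 4 * α * ρ0 ^ 2 = (C + 1 + B) + 4 * ρ0 ^ 2 := by
      rw [hα]; field_simp
    rw [this]
    have : 0 < 4 * ρ0 ^ 2 := by positivity
    linarith
  set K := Real.exp (-α * ρ ^ 2) with hK
  have hK0 : 0 < K := Real.exp_pos _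
  -- the barrier inequality
  have hbar : ∀ x ∈ Metric.closedBall p ρ, ρ0 ≤ ‖x - p‖ →
      (C + 1) * Real.exp (-α * ‖x - p‖ ^ 2) ≤ lapk k (barr α K p) x := by
    intro x hx hx0
    rw [lapk_barr, mul_comm]
    refine mul_le_mul_of_nonneg_left ?_ (Real.exp_pos _).le
    rw [Metric.mem_closedBall, dist_eq_norm] at hx
    have hxm : m ≤ ‖x‖ := by
      have := norm_sub_norm_le p x
      rw [norm_sub_rev] at this
      linarith
    have hx00 : 0 < ‖x‖ := by linarith
    have hinner : x 0 * p 0 + x 1 * p 1 ≤ ‖x‖ * ‖p‖ := by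
      have h1 := nsq x
      have h2 := nsq p
      apply le_of_sq_le_sq _ (by positivity)
      rw [mul_pow, h1, h2]
      nlinarith [sq_nonneg (x 0 * p 1 - x 1 * p 0)]
    have h3 : ((k : ℝ) ^ 2 - 1) / ‖x‖ ^ 2 * (x 0 * p 0 + x 1 * p 1) ≤
        ((k : ℝ) ^ 2 - 1) * (‖p‖ / m) := by
      calc ((k : ℝ) ^ 2 - 1) / ‖x‖ ^ 2 * (x 0 * p 0 + x 1 * p 1)
          ≤ ((k : ℝ) ^ 2 - 1) / ‖x‖ ^ 2 * (‖x‖ * ‖p‖) := by gcongr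
        _ = ((k : ℝ) ^ 2 - 1) * (‖p‖ / ‖x‖) := by field_simp
        _ ≤ _ := by gcongr
    have h4 : 0 ≤ ((k : ℝ) ^ 2 - 1) / ‖x‖ ^ 2 * (4 * α ^ 2 * (x 1 * p 0 - x 0 * p 1) ^ 2) := by
      positivity
    have h5 : ρ0 ^ 2 ≤ ‖x - p‖ ^ 2 := by gcongr
    have h6 : 4 * α ^ 2 * ρ0 ^ 2 ≤ 4 * α ^ 2 * ‖x - p‖ ^ 2 := by gcongr
    have h7 : α * (C + 1 + B) ≤ α * (4 * α * ρ0 ^ 2) := by gcongr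
    have h8 : C + 1 ≤ α * (C + 1) := by nlinarith
    have h9 := mul_le_mul_of_nonneg_left h3 (by linarith : 0 ≤ 2 * α)
    have h10 : α * B = 4 * α + 2 * α * (((k : ℝ) ^ 2 - 1) * (‖p‖ / m)) := by rw [hB]; ring
    nlinarith
  intro x1 hx1
  by_contra hneg
  push Not at hneg
  set g : Euc 2 → ℝ := fun y => s y - δ * barr α K p y with hg
  have hgc : ∀ x ∈ Metric.closedBall p ρ, ContDiffAt ℝ 2 g x := fun x hx =>
    (hs x hx).sub (contDiffAt_const.mul (barr_contDiff α K p).contDiffAt)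
  obtain ⟨z, hz, hzmin⟩ := (isCompact_closedBall p ρ).exists_isMinOn ⟨p, hpm⟩
    (f := g) (fun x hx => (hgc x hx).continuousAt.continuousWithinAt)
  have hgx1 : g x1 < 0 := by
    have : 0 < barr α K p x1 := by
      rw [Metric.mem_ball, dist_eq_norm] at hx1
      simp only [barr, hK, sub_pos]
      apply Real.exp_lt_exp.2
      have : ‖x1 - p‖ ^ 2 < ρ ^ 2 := by gcongr
      nlinarith
    have := mul_pos hδ0 this
    simp only [hg]
    linarith
  have hgz : g z < 0 := lt_of_le_of_lt (hzmin (Metric.ball_subset_closedBall hx1)) hgx1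
  have hE1 : Real.exp (-α * ‖z - p‖ ^ 2) ≤ 1 := by
    apply Real.exp_le_one_iff.2
    have : 0 ≤ ‖z - p‖ ^ 2 := by positivity
    nlinarith
  have hz0 : ρ0 ≤ ‖z - p‖ := by
    by_contra hlt
    push Not at hlt
    have h1 := hball z (by rwa [Metric.mem_ball, dist_eq_norm])
    have h2 : barr α K p z ≤ 1 := by simp only [barr]; linarith
    simp only [hg] at hgz
    nlinarith
  have hz1 : z ∈ Metric.ball p ρ := by
    rw [Metric.mem_closedBall, dist_eq_norm] at hz
    rw [Metric.mem_ball, dist_eq_norm]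
    refine lt_of_le_of_ne hz fun heq => ?_
    have h1 := hs0 z (by rw [Metric.mem_closedBall, dist_eq_norm]; exact hz)
    have h2 : barr α K p z = 0 := by simp only [barr, hK, heq, sub_self]
    simp only [hg, h2] at hgz
    linarith
  have hloc : IsLocalMin g z := by
    filter_upwards [Metric.isOpen_ball.mem_nhds hz1] with y hy
    exact hzmin (Metric.ball_subset_closedBall hy)
  have hnn := lapk_nonneg_of_min k hk (hgc z hz) hloc
  have heq : lapk k g z = lapk k s z - δ * lapk k (barr α K p) z := by
    rw [hg, lapk_sub k (hs z hz) (contDiffAt_const.mul (barr_contDiff α K p).contDiffAt),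
      lapk_const_mul k (barr_contDiff α K p).contDiffAt]
  have h1 := hL z hz
  have h2 := mul_le_mul_of_nonneg_left (hbar z hz hz0) hδ0.le
  have hE := Real.exp_pos (-α * ‖z - p‖ ^ 2)
  have h3 : barr α K p z = Real.exp (-α * ‖z - p‖ ^ 2) - K := rfl
  simp only [hg, h3] at hgz
  have h4 := mul_nonneg hC (mul_pos hδ0 hK0).le
  have h5 := mul_pos hδ0 hE
  have h6 := mul_nonneg hC (by linarith : 0 ≤ -(s z - δ * (Real.exp (-α * ‖z - p‖ ^ 2) - K)))
  nlinarith

lemma smp (k : ℕ) (hk : 1 ≤ k) (D : Set (Euc 2)) (hD : IsOpen D) (hDc : IsPreconnected D)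
    (h0 : (0 : Euc 2) ∉ D) (s : Euc 2 → ℝ) (C : ℝ) (hC : 0 ≤ C)
    (hs : ∀ x ∈ D, ContDiffAt ℝ 2 s x) (hs0 : ∀ x ∈ D, 0 ≤ s x)
    (hL : ∀ x ∈ D, lapk k s x ≤ C * s x) :
    (∀ x ∈ D, s x = 0) ∨ (∀ x ∈ D, 0 < s x) := by
  by_contra hcon
  push Not at hcon
  obtain ⟨⟨x, hx, hxs⟩, ⟨y, hy, hys⟩⟩ := hcon
  have hc : ContinuousOn s D := fun x hx => (hs x hx).continuousAt.continuousWithinAt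
  have hU : IsOpen (D ∩ s ⁻¹' Set.Ioi 0) := hc.isOpen_inter_preimage hD isOpen_Ioi
  have hV : IsOpen (D ∩ s ⁻¹' {0}) := by
    rw [Metric.isOpen_iff]
    rintro z ⟨hz, hzs⟩
    obtain ⟨ε, hε, hεD⟩ := Metric.isOpen_iff.1 hD z hz
    refine ⟨ε / 4, by positivity, fun p hp => ?_⟩
    have hpD : p ∈ D := hεD (Metric.ball_subset_ball (by linarith) hp)
    refine ⟨hpD, ?_⟩
    by_contra hne
    have hpp : 0 < s p := lt_of_le_of_ne (hs0 p hpD) (Ne.symm hne)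
    rw [Metric.mem_ball] at hp
    have hsub : Metric.closedBall p (ε / 2) ⊆ D := fun q hq => by
      apply hεD
      rw [Metric.mem_closedBall] at hq
      rw [Metric.mem_ball]
      have := dist_triangle q p z
      linarith
    have hnp : ε / 2 < ‖p‖ := by
      by_contra hle
      push Not at hle
      apply h0
      apply hsub
      rw [Metric.mem_closedBall, dist_zero_left]
      exact hle
    have := pos_ball k hk s p (ε / 2) C (by positivity) hnp hC (fun x hx => hs x (hsub hx))
      (fun x hx => hs0 x (hsub hx)) (fun x hx => hL x (hsub hx)) hpp z (by
        rw [Metric.mem_ball, dist_comm]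
        linarith)
    have hzs' : s z = 0 := hzs
    linarith
  obtain ⟨w, _, hw1, hw2⟩ := hDc _ _ hU hV (fun z hz => by
    rcases (hs0 z hz).lt_or_eq with h | h
    · exact Or.inl ⟨hz, h⟩
    · exact Or.inr ⟨hz, h.symm⟩)
    ⟨x, hx, hx, lt_of_le_of_ne (hs0 x hx) (Ne.symm hxs)⟩
    ⟨y, hy, hy, le_antisymm hys (hs0 y hy)⟩
  have h1 : 0 < s w := hw1.2
  have h2 : s w = 0 := hw2.2
  linarith

/-! ### Reflections and the domain -/

lemma inner_reflH {a : Euc 2} (ha : ‖a‖ = 1) (x : Euc 2) :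
    (inner ℝ a (reflH a x) : ℝ) = -inner ℝ a x := by
  rw [reflH, inner_sub_right, inner_smul_right, real_inner_self_eq_norm_sq, ha]
  ring

lemma reflH_reflH {a : Euc 2} (ha : ‖a‖ = 1) (x : Euc 2) : reflH a (reflH a x) = x := by
  have := inner_reflH ha x
  rw [reflH, this, reflH]
  module

lemma norm_reflH {a : Euc 2} (ha : ‖a‖ = 1) (x : Euc 2) : ‖reflH a x‖ = ‖x‖ := by
  have : ‖reflH a x‖ ^ 2 = ‖x‖ ^ 2 := by
    rw [reflH, norm_sub_sq_real, inner_smul_right, norm_smul, ha, real_inner_comm]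
    simp only [Real.norm_eq_abs, mul_one, sq_abs]
    ring
  exact (sq_eq_sq₀ (norm_nonneg _) (norm_nonneg _)).1 this

lemma reflH_neg_right (a x : Euc 2) : reflH a (-x) = -reflH a x := by
  rw [reflH, reflH, inner_neg_right]
  module

lemma reflH_neg_left (a x : Euc 2) : reflH (-a) x = reflH a x := by
  rw [reflH, reflH, inner_neg_left]
  module

lemma reflH_continuous (a : Euc 2) : Continuous (reflH a) := by
  unfold reflH
  fun_prop

lemma exists_refl_swap {x y : Euc 2} (hxy : ‖x‖ = ‖y‖) (hne : x ≠ y) :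
    ∃ (a : Euc 2) (c : ℝ), 0 < c ∧ a = c • (x - y) ∧ ‖a‖ = 1 ∧ 0 < (inner ℝ a x : ℝ) ∧
      reflH a x = y := by
  have hn : 0 < ‖x - y‖ := norm_pos_iff.2 (sub_ne_zero.2 hne)
  have hi : 2 * (inner ℝ (x - y) x : ℝ) = ‖x - y‖ ^ 2 := by
    rw [norm_sub_sq_real, inner_sub_left, real_inner_self_eq_norm_sq, real_inner_comm x y, ← hxy]
    ring
  refine ⟨‖x - y‖⁻¹ • (x - y), ‖x - y‖⁻¹, by positivity, rfl, ?_, ?_, ?_⟩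
  · rw [norm_smul, norm_inv, norm_norm]
    field_simp
  · rw [inner_smul_left]
    simp only [conj_trivial]
    have : 0 < (inner ℝ (x - y) x : ℝ) := by
      have : 0 < ‖x - y‖ ^ 2 := by positivity
      linarith
    positivity
  · rw [reflH, inner_smul_left, smul_smul]
    simp only [conj_trivial]
    have : 2 * (‖x - y‖⁻¹ * (inner ℝ (x - y) x : ℝ)) * ‖x - y‖⁻¹ = 1 := by
      have : 2 * (‖x - y‖⁻¹ * (inner ℝ (x - y) x : ℝ)) * ‖x - y‖⁻¹
        = ‖x - y‖⁻¹ * ‖x - y‖⁻¹ * (2 * (inner ℝ (x - y) x : ℝ)) := by ring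
      rw [this, hi]
      field_simp
    rw [this, one_smul]
    abel

lemma dom_facts {Ω : Set (Euc 2)} (hΩ : RadialDomain Ω) :
    IsOpen Ω ∧ IsCompact (closure Ω) ∧ (∀ x y : Euc 2, ‖x‖ = ‖y‖ → x ∈ Ω → y ∈ Ω) ∧
      ∃ r R : ℝ, 0 ≤ r ∧ ∀ x : Euc 2, x ≠ 0 → (x ∈ Ω ↔ r < ‖x‖ ∧ ‖x‖ < R) := by
  rcases hΩ with ⟨R, hR, rfl⟩ | ⟨r, R, hr, hrR, rfl⟩
  · refine ⟨Metric.isOpen_ball, Metric.isBounded_ball.isCompact_closure, ?_, 0, R, le_rfl, ?_⟩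
    · intro x y h hx
      rw [mem_ball_zero_iff] at *
      rwa [← h]
    · intro x hx
      rw [mem_ball_zero_iff]
      have := norm_pos_iff.2 hx
      tauto
  · refine ⟨?_, ?_, ?_, r, R, hr.le, ?_⟩
    · exact (isOpen_lt continuous_const continuous_norm).inter
        (isOpen_lt continuous_norm continuous_const)
    · apply Bornology.IsBounded.isCompact_closure
      refine (Metric.isBounded_ball (x := (0 : Euc 2)) (r := R)).subset fun x hx => ?_
      rw [mem_ball_zero_iff]
      exact hx.2
    · intro x y h hx
      simp only [Set.mem_ofPred_eq] at *
      rwa [← h]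
    · intro x hx
      rfl

lemma half_preconn {Ω : Set (Euc 2)} {r R : ℝ} (hr : 0 ≤ r)
    (h : ∀ x : Euc 2, x ≠ 0 → (x ∈ Ω ↔ r < ‖x‖ ∧ ‖x‖ < R)) (a : Euc 2) :
    IsPreconnected (Ω ∩ {x | 0 < (inner ℝ a x : ℝ)}) := by
  have hconv : Convex ℝ {x : Euc 2 | 0 < (inner ℝ a x : ℝ)} := by
    intro x hx y hy s t hs ht hst
    simp only [Set.mem_ofPred_eq] at *
    rw [inner_add_right, inner_smul_right, inner_smul_right]
    rcases hs.eq_or_lt with h0 | h0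
    · have : t = 1 := by linarith
      subst h0; subst this
      linarith
    · have := mul_pos h0 hx
      have := mul_nonneg ht hy.le
      linarith
  have hne : ∀ x : Euc 2, 0 < (inner ℝ a x : ℝ) → x ≠ 0 := by
    rintro x hx rfl
    simp at hx
  have hP : IsPreconnected ((Set.Ioo r R) ×ˢ {x : Euc 2 | 0 < (inner ℝ a x : ℝ)}) :=
    ((convex_Ioo r R).prod hconv).isPreconnected
  have := hP.image (fun q : ℝ × Euc 2 => (q.1 * ‖q.2‖⁻¹) • q.2) (by
    intro q hq
    have hq2 := norm_ne_zero_iff.2 (hne q.2 hq.2)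
    apply ContinuousAt.continuousWithinAt
    have h1 : ContinuousAt (fun q : ℝ × Euc 2 => ‖q.2‖⁻¹) q :=
      (continuous_snd.norm.continuousAt).inv₀ hq2
    exact (continuousAt_fst.mul h1).smul continuousAt_snd)
  convert this using 1
  ext x
  constructor
  · rintro ⟨hx, hxa⟩
    have hx0 := hne x hxa
    refine ⟨(‖x‖, x), ⟨(h x hx0).1 hx, hxa⟩, ?_⟩
    have := norm_ne_zero_iff.2 hx0
    simp [this]
  · rintro ⟨⟨t, v⟩, ⟨ht, hv⟩, rfl⟩
    simp only [Set.mem_ofPred_eq] at hv ht ⊢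
    have hv0 := hne v hv
    have hvn := norm_pos_iff.2 hv0
    have ht0 : 0 < t := lt_of_le_of_lt hr ht.1
    have hn : ‖(t * ‖v‖⁻¹) • v‖ = t := by
      rw [norm_smul, Real.norm_of_nonneg (by positivity)]
      field_simp
    have hin : 0 < (inner ℝ a ((t * ‖v‖⁻¹) • v) : ℝ) := by
      rw [inner_smul_right]
      positivity
    refine ⟨(h _ (hne _ hin)).2 ?_, hin⟩
    rw [hn]
    exact ht

lemma polr_pos {a : Euc 2} (u : Euc 2 → ℝ) {x : Euc 2} (h : 0 < (inner ℝ a x : ℝ)) :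
    polr a u x = max (u x) (u (reflH a x)) := by
  rw [polr, if_pos h.le]

lemma polr_neg {a : Euc 2} (u : Euc 2 → ℝ) {x : Euc 2} (h : (inner ℝ a x : ℝ) < 0) :
    polr a u x = min (u x) (u (reflH a x)) := by
  rw [polr, if_neg (not_le.2 h)]

/-! ### No strict simultaneous increase -/

section Main

variable {Ω : Set (Euc 2)} {k : ℕ} {beta : ℝ} {u : Euc 2 → ℝ}

/-- The equation, for a function `v`. -/
def EqOnDom (Ω : Set (Euc 2)) (k : ℕ) (beta : ℝ) (v : Euc 2 → ℝ) : Prop :=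
  ∀ x ∈ Ω, -(lapk k v x) + v x = (v x) ^ 3 + beta * v x * (v (-x)) ^ 2

lemma loc_gen {v : Euc 2 → ℝ} (hbeta : beta < 0) (hu : EqOnDom Ω k beta u)
    (hv : EqOnDom Ω k beta v) {z : Euc 2} (hz : z ∈ Ω) (h : v =ᶠ[nhds z] u) :
    u z = 0 ∨ (v (-z)) ^ 2 = (u (-z)) ^ 2 := by
  have h1 := hu z hz
  have h2 := hv z hz
  rw [lapk_congr k h, h.eq_of_nhds] at h2
  have h3 : beta * (u z * ((v (-z)) ^ 2 - (u (-z)) ^ 2)) = 0 := by linarith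
  rcases mul_eq_zero.1 h3 with h4 | h4
  · exact absurd h4 hbeta.ne
  · rcases mul_eq_zero.1 h4 with h5 | h5
    · exact Or.inl h5
    · exact Or.inr (sub_eq_zero.1 h5)

lemma half_step (hΩo : IsOpen Ω) (hΩr : ∀ x y : Euc 2, ‖x‖ = ‖y‖ → x ∈ Ω → y ∈ Ω)
    (hbeta : beta < 0) (huc : ContinuousOn u Ω) (hu : EqOnDom Ω k beta u)
    (hpol : ∀ a : Euc 2, ‖a‖ = 1 → EqOnDom Ω k beta (polr a u))
    {x y : Euc 2} (hx : x ∈ Ω) (hxy : ‖x‖ = ‖y‖) (h1 : u x < u y) (h2 : u (-x) < u (-y)) :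
    u (-y) = -u (-x) := by
  have hne : y ≠ x := by
    rintro rfl
    exact lt_irrefl _ h1
  have hy : y ∈ Ω := hΩr x y hxy hx
  obtain ⟨a, c, _, _, ha, hay, hyx⟩ := exists_refl_swap hxy.symm hne
  have hxy' : reflH a x = y := by rw [← hyx, reflH_reflH ha]
  have hax : (inner ℝ a x : ℝ) < 0 := by
    have := inner_reflH ha y
    rw [hyx] at this
    linarith
  have hcont : ∀ z ∈ Ω, ContinuousAt u z := fun z hz => huc.continuousAt (hΩo.mem_nhds hz)
  have hcr : ∀ z ∈ Ω, ContinuousAt (fun w => u (reflH a w)) z := fun z hz =>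
    ContinuousAt.comp (f := reflH a) (g := u)
      (hcont _ (hΩr z _ (norm_reflH ha z).symm hz)) (reflH_continuous a).continuousAt
  have hinn : Continuous fun w : Euc 2 => (inner ℝ a w : ℝ) := by fun_prop
  have hevy : polr a u =ᶠ[nhds y] u := by
    have e1 : ∀ᶠ w in nhds y, 0 < (inner ℝ a w : ℝ) :=
      hinn.continuousAt.eventually (lt_mem_nhds hay)
    have e2 : ∀ᶠ w in nhds y, u (reflH a w) < u w :=
      (hcr y hy).eventually_lt (hcont y hy) (by rwa [hyx])
    filter_upwards [e1, e2] with w w1 w2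
    rw [polr_pos u w1, max_eq_left w2.le]
  have hevx : polr a u =ᶠ[nhds x] u := by
    have e1 : ∀ᶠ w in nhds x, (inner ℝ a w : ℝ) < 0 :=
      hinn.continuousAt.eventually (gt_mem_nhds hax)
    have e2 : ∀ᶠ w in nhds x, u w < u (reflH a w) :=
      (hcont x hx).eventually_lt (hcr x hx) (by rwa [hxy'])
    filter_upwards [e1, e2] with w w1 w2
    rw [polr_neg u w1, min_eq_left w2.le]
  have ky := loc_gen hbeta hu (hpol a ha) hy hevy
  have kx := loc_gen hbeta hu (hpol a ha) hx hevx
  rw [polr_neg u (by rw [inner_neg_right]; linarith), reflH_neg_right, hyx,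
    min_eq_right h2.le] at ky
  rw [polr_pos u (by rw [inner_neg_right]; linarith), reflH_neg_right, hxy',
    max_eq_right h2.le] at kx
  have hsq : (u (-y)) ^ 2 = (u (-x)) ^ 2 := by
    rcases ky with ky | ky
    · rcases kx with kx | kx
      · linarith
      · exact kx
    · exact ky.symm
  rcases sq_eq_sq_iff_eq_or_eq_neg.1 hsq with h | h
  · linarith
  · exact h

lemma no_both (hΩo : IsOpen Ω) (hΩr : ∀ x y : Euc 2, ‖x‖ = ‖y‖ → x ∈ Ω → y ∈ Ω)
    (hbeta : beta < 0) (huc : ContinuousOn u Ω) (hu : EqOnDom Ω k beta u)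
    (hpol : ∀ a : Euc 2, ‖a‖ = 1 → EqOnDom Ω k beta (polr a u))
    {x y : Euc 2} (hx : x ∈ Ω) (hxy : ‖x‖ = ‖y‖) (h1 : u x < u y) (h2 : u (-x) < u (-y)) :
    False := by
  have hval : ∀ z : Euc 2, ‖x‖ = ‖z‖ → u x < u z → u (-x) < u (-z) →
      u z = -u x ∧ u (-z) = -u (-x) := by
    intro z hz g1 g2
    refine ⟨?_, half_step hΩo hΩr hbeta huc hu hpol hx hz g1 g2⟩
    have := half_step hΩo hΩr hbeta huc hu hpol (x := -x) (y := -z)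
      (hΩr x _ (norm_neg x).symm hx) (by rw [norm_neg, norm_neg, hz]) g2
      (by simpa only [neg_neg] using g1)
    simpa only [neg_neg] using this
  have hS : IsPreconnected (Metric.sphere (0 : Euc 2) ‖x‖) := by
    apply isPreconnected_sphere
    rw [← Module.finrank_eq_rank, finrank_euclideanSpace_fin]
    norm_num
  have hSΩ : ∀ z ∈ Metric.sphere (0 : Euc 2) ‖x‖, z ∈ Ω := fun z hz =>
    hΩr x z (by rw [mem_sphere_zero_iff_norm] at hz; exact hz.symm) hx
  have hcont : ∀ z ∈ Ω, ContinuousAt u z := fun z hz => huc.continuousAt (hΩo.mem_nhds hz)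
  have hfc : ContinuousOn (fun z => min (u z - u x) (u (-z) - u (-x)))
      (Metric.sphere (0 : Euc 2) ‖x‖) := by
    intro z hz
    apply ContinuousAt.continuousWithinAt
    have hzΩ := hSΩ z hz
    have c1 := hcont z hzΩ
    have c2 : ContinuousAt (fun w => u (-w)) z := ContinuousAt.comp (f := fun w => -w) (g := u)
      (hcont _ (hΩr z _ (norm_neg z).symm hzΩ)) continuous_neg.continuousAt
    exact (c1.sub continuousAt_const).min (c2.sub continuousAt_const)
  have hiv := hS.intermediate_value (a := x) (b := y) (by simp)
    (by rw [mem_sphere_zero_iff_norm]; exact hxy.symm) hfc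
  obtain ⟨hy1, hy2⟩ := hval y hxy h1 h2
  have hpos : 0 < min (u y - u x) (u (-y) - u (-x)) := lt_min (by linarith) (by linarith)
  set M := min (u y - u x) (u (-y) - u (-x)) with hM
  obtain ⟨z, hz, hzM⟩ := hiv (show M / 2 ∈ _ by
    constructor
    · simp only [sub_self, min_self]; linarith
    · change M / 2 ≤ M; linarith)
  change min (u z - u x) (u (-z) - u (-x)) = M / 2 at hzM
  have hzp : 0 < min (u z - u x) (u (-z) - u (-x)) := by rw [hzM]; linarith
  obtain ⟨q1, q2⟩ := lt_min_iff.1 hzp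
  obtain ⟨r1, r2⟩ := hval z (by rw [mem_sphere_zero_iff_norm] at hz; exact hz.symm)
    (by linarith) (by linarith)
  rw [r1, r2, ← hy1, ← hy2, ← hM] at hzM
  linarith

/-! ### The dichotomy -/

lemma alg_ineq {b M p q P Q : ℝ} (hb : 0 < b) (hp : |p| ≤ M) (hQ : |Q| ≤ M) (hP : |P| ≤ M)
    (hq : |q| ≤ M) (h1 : p ≤ P) (h2 : Q ≤ q) :
    (P - P ^ 3 + b * P * Q ^ 2 - (p - p ^ 3 + b * p * q ^ 2))
      - (Q - Q ^ 3 + b * Q * P ^ 2 - (q - q ^ 3 + b * q * p ^ 2))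
      ≤ (1 + 3 * b * M ^ 2) * ((P - p) - (Q - q)) := by
  have hM : 0 ≤ M := (abs_nonneg _).trans hp
  have prod : ∀ s t : ℝ, |s| ≤ M → |t| ≤ M → |s * t| ≤ M ^ 2 := by
    intro s t hs ht
    rw [abs_mul, sq]
    exact mul_le_mul hs ht (abs_nonneg _) hM
  have a1 := (abs_le.1 (prod Q Q hQ hQ)).2
  have a2 := (abs_le.1 (prod p p hp hp)).2
  have a3 := (abs_le.1 (prod p Q hp hQ)).1
  have a4 := (abs_le.1 (prod p q hp hq)).1
  have a5 := (abs_le.1 (prod Q P hQ hP)).1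
  have t1 : (P - p) * (1 - (P ^ 2 + P * p + p ^ 2)) ≤ P - p := by
    have : 0 ≤ (P - p) * (P ^ 2 + P * p + p ^ 2) :=
      mul_nonneg (by linarith) (by nlinarith [sq_nonneg (P + p), sq_nonneg P, sq_nonneg p])
    linarith
  have t2 : (q - Q) * (1 - (q ^ 2 + q * Q + Q ^ 2)) ≤ q - Q := by
    have : 0 ≤ (q - Q) * (q ^ 2 + q * Q + Q ^ 2) :=
      mul_nonneg (by linarith) (by nlinarith [sq_nonneg (q + Q), sq_nonneg q, sq_nonneg Q])
    linarith
  have t3 : P * Q ^ 2 - p * q ^ 2 ≤ (P - p) * M ^ 2 + (q - Q) * (2 * M ^ 2) := by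
    have e : P * Q ^ 2 - p * q ^ 2 = (P - p) * (Q * Q) + (q - Q) * (-(p * Q) - p * q) := by ring
    rw [e]
    apply add_le_add
    · exact mul_le_mul_of_nonneg_left a1 (by linarith)
    · exact mul_le_mul_of_nonneg_left (by linarith) (by linarith)
  have t4 : q * p ^ 2 - Q * P ^ 2 ≤ (q - Q) * M ^ 2 + (P - p) * (2 * M ^ 2) := by
    have e : q * p ^ 2 - Q * P ^ 2 = (q - Q) * (p * p) + (P - p) * (-(p * Q) - Q * P) := by ring
    rw [e]
    apply add_le_add
    · exact mul_le_mul_of_nonneg_left a2 (by linarith)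
    · exact mul_le_mul_of_nonneg_left (by linarith) (by linarith)
  have t5 := mul_le_mul_of_nonneg_left (add_le_add t3 t4) hb.le
  linarith

lemma dichotomy (hΩo : IsOpen Ω) (hΩr : ∀ x y : Euc 2, ‖x‖ = ‖y‖ → x ∈ Ω → y ∈ Ω)
    {r R : ℝ} (hr : 0 ≤ r) (hrR : ∀ x : Euc 2, x ≠ 0 → (x ∈ Ω ↔ r < ‖x‖ ∧ ‖x‖ < R))
    (hk : 1 ≤ k)
    (hbeta : beta < 0) (hur : ContDiffOn ℝ 2 u Ω) (hu : EqOnDom Ω k beta u)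
    (hpolr : ∀ a : Euc 2, ‖a‖ = 1 → ContDiffOn ℝ 2 (polr a u) Ω)
    (hpol : ∀ a : Euc 2, ‖a‖ = 1 → EqOnDom Ω k beta (polr a u))
    {M : ℝ} (hM : ∀ x ∈ Ω, |u x| ≤ M) {a : Euc 2} (ha : ‖a‖ = 1) :
    (∀ x ∈ Ω, 0 < (inner ℝ a x : ℝ) → u (reflH a x) ≤ u x) ∨
    (∀ x ∈ Ω, 0 < (inner ℝ a x : ℝ) → u x ≤ u (reflH a x)) := by
  set D := Ω ∩ {x : Euc 2 | 0 < (inner ℝ a x : ℝ)} with hDdef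
  have hinn : Continuous fun w : Euc 2 => (inner ℝ a w : ℝ) := by fun_prop
  have hDo : IsOpen D := hΩo.inter (isOpen_lt continuous_const hinn)
  have hDc : IsPreconnected D := half_preconn hr hrR a
  have h0 : (0 : Euc 2) ∉ D := by
    rintro ⟨_, h⟩
    simp at h
  have hneg : ∀ x ∈ Ω, -x ∈ Ω := fun x hx => hΩr x _ (norm_neg x).symm hx
  have hrefl : ∀ x ∈ Ω, reflH a x ∈ Ω := fun x hx => hΩr x _ (norm_reflH ha x).symm hx
  set P := polr a u with hP
  set v : Euc 2 → ℝ := fun y => P y - u y with hv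
  set s : Euc 2 → ℝ := fun y => v y - v (-y) with hs
  have cu : ∀ x ∈ Ω, ContDiffAt ℝ 2 u x := fun x hx => hur.contDiffAt (hΩo.mem_nhds hx)
  have cP : ∀ x ∈ Ω, ContDiffAt ℝ 2 P x := fun x hx => (hpolr a ha).contDiffAt (hΩo.mem_nhds hx)
  have cv : ∀ x ∈ Ω, ContDiffAt ℝ 2 v x := fun x hx => (cP x hx).sub (cu x hx)
  have cvn : ∀ x ∈ Ω, ContDiffAt ℝ 2 (fun y => v (-y)) x := fun x hx =>
    ContDiffAt.comp (f := fun y : Euc 2 => -y) (g := v) x (cv _ (hneg x hx)) contDiff_neg.contDiffAt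
  have cs : ∀ x ∈ Ω, ContDiffAt ℝ 2 s x := fun x hx => (cv x hx).sub (cvn x hx)
  have hp1 : ∀ x ∈ D, P x = max (u x) (u (reflH a x)) := fun x hx => polr_pos u hx.2
  have hp2 : ∀ x ∈ D, P (-x) = min (u (-x)) (u (-reflH a x)) := fun x hx => by
    have h2 : 0 < (inner ℝ a x : ℝ) := hx.2
    rw [hP, polr_neg u (by rw [inner_neg_right]; linarith), reflH_neg_right]
  have hs0 : ∀ x ∈ D, 0 ≤ s x := by
    intro x hx
    have e1 := le_max_left (u x) (u (reflH a x))
    have e2 := min_le_left (u (-x)) (u (-reflH a x))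
    simp only [hs, hv, hp1 x hx, hp2 x hx]
    linarith
  have hM0 : ∀ x ∈ D, 0 ≤ M := fun x hx => (abs_nonneg _).trans (hM x hx.1)
  have hL : ∀ x ∈ D, lapk k s x ≤ (1 + 3 * (-beta) * M ^ 2) * s x := by
    intro x hx
    have hxΩ := hx.1
    have hnx := hneg x hxΩ
    have e1 : lapk k s x = (lapk k P x - lapk k u x) - (lapk k P (-x) - lapk k u (-x)) := by
      rw [hs, lapk_sub k (cv x hxΩ) (cvn x hxΩ), lapk_neg k (cv _ hnx), hv,
        lapk_sub k (cP x hxΩ) (cu x hxΩ), lapk_sub k (cP _ hnx) (cu _ hnx)]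
    have q1 := hpol a ha x hxΩ
    have q2 := hpol a ha (-x) hnx
    have q3 := hu x hxΩ
    have q4 := hu (-x) hnx
    rw [neg_neg] at q2 q4
    rw [← hP] at q1 q2
    have b1 : |P x| ≤ M := by
      rw [hp1 x hx]
      exact abs_max_le_max_abs_abs.trans (max_le (hM x hxΩ) (hM _ (hrefl x hxΩ)))
    have b2 : |P (-x)| ≤ M := by
      rw [hp2 x hx]
      exact abs_min_le_max_abs_abs.trans (max_le (hM _ hnx) (hM _ (hneg _ (hrefl x hxΩ))))
    have key := alg_ineq (b := -beta) (by linarith) (hM x hxΩ) b2 b1 (hM _ hnx)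
      (by rw [hp1 x hx]; exact le_max_left _ _) (by rw [hp2 x hx]; exact min_le_left _ _)
    simp only [hs, hv]
    rw [show lapk k (fun y => P y - u y - (P (-y) - u (-y))) x = lapk k s x from rfl, e1]
    linarith
  rcases smp k hk D hDo hDc h0 s (1 + 3 * (-beta) * M ^ 2) (by
      have := mul_nonneg (by linarith : 0 ≤ -beta) (sq_nonneg M)
      linarith) (fun x hx => cs x hx.1) hs0 hL with hz | hpos
  · left
    intro x hx hax
    have hxD : x ∈ D := ⟨hx, hax⟩
    have h1 := hz x hxD
    simp only [hs, hv, hp1 x hxD, hp2 x hxD] at h1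
    have e1 := le_max_left (u x) (u (reflH a x))
    have e1' := le_max_right (u x) (u (reflH a x))
    have e2 := min_le_left (u (-x)) (u (-reflH a x))
    linarith
  · right
    intro x hx hax
    have hxD : x ∈ D := ⟨hx, hax⟩
    have h1 := hpos x hxD
    simp only [hs, hv, hp1 x hxD, hp2 x hxD] at h1
    by_contra hlt
    push Not at hlt
    rw [max_eq_left hlt.le] at h1
    have h2 : u (-reflH a x) < u (-x) := by
      by_contra hge
      push Not at hge
      rw [min_eq_left hge] at h1
      linarith
    exact no_both hΩo hΩr hbeta hur.continuousOn hu hpol (hrefl x hx) (norm_reflH ha x) hlt h2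

end Main

/-! ### Choice of the axis -/

/-- The reflection as a linear isometry equivalence. -/
def reflE {a : Euc 2} (ha : ‖a‖ = 1) : Euc 2 ≃ₗᵢ[ℝ] Euc 2 where
  toFun := reflH a
  invFun := reflH a
  map_add' x y := by
    simp only [reflH, inner_add_right]
    module
  map_smul' c x := by
    simp only [reflH, inner_smul_right, RingHom.id_apply]
    module
  left_inv := reflH_reflH ha
  right_inv := reflH_reflH ha
  norm_map' := norm_reflH ha

lemma axis_sign {Ω : Set (Euc 2)} {u : Euc 2 → ℝ} (hΩo : IsOpen Ω)
    (hΩc : IsCompact (closure Ω))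
    (hΩr : ∀ x y : Euc 2, ‖x‖ = ‖y‖ → x ∈ Ω → y ∈ Ω) (huc : ContinuousOn u (closure Ω))
    {a : Euc 2} (ha : ‖a‖ = 1)
    (hG : ∀ x ∈ Ω, 0 ≤ (u x - u (reflH a x)) * (inner ℝ a x : ℝ)) :
    0 ≤ (inner ℝ a (∫ x in Ω, u x • x) : ℝ) ∧
    ((inner ℝ a (∫ x in Ω, u x • x) : ℝ) = 0 →
      ∀ x ∈ Ω, (u x - u (reflH a x)) * (inner ℝ a x : ℝ) = 0) := by
  have hi : IntegrableOn (fun x : Euc 2 => u x • x) Ω :=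
    ((huc.smul continuousOn_id).integrableOn_compact hΩc).mono_set subset_closure
  have hinn : Continuous fun w : Euc 2 => (inner ℝ a w : ℝ) := by fun_prop
  have hI1 : IntegrableOn (fun x : Euc 2 => u x * (inner ℝ a x : ℝ)) Ω :=
    ((huc.mul hinn.continuousOn).integrableOn_compact hΩc).mono_set subset_closure
  have hX : (inner ℝ a (∫ x in Ω, u x • x) : ℝ) = ∫ x in Ω, u x * (inner ℝ a x : ℝ) := by
    rw [← integral_inner hi a]
    simp only [inner_smul_right]
  have hpre : (reflE ha) ⁻¹' Ω = Ω := by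
    ext x
    exact ⟨fun h => hΩr _ x (norm_reflH ha x) h, fun h => hΩr x _ (norm_reflH ha x).symm h⟩
  have hmp := (reflE ha).measurePreserving
  have hme : MeasurableEmbedding (reflE ha) :=
    (reflE ha).toHomeomorph.measurableEmbedding
  have hsub : ∫ x in Ω, u (reflH a x) * (inner ℝ a x : ℝ) =
      -∫ x in Ω, u x * (inner ℝ a x : ℝ) := by
    have := hmp.setIntegral_preimage_emb hme (fun x => u x * (inner ℝ a x : ℝ)) Ω
    rw [hpre] at this
    rw [← this, ← integral_neg]
    congr 1
    funext x
    change u (reflH a x) * (inner ℝ a x : ℝ) = -(u (reflH a x) * (inner ℝ a (reflH a x) : ℝ))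
    rw [inner_reflH ha]
    ring
  have hI2 : IntegrableOn (fun x : Euc 2 => u (reflH a x) * (inner ℝ a x : ℝ)) Ω := by
    have := (hmp.integrableOn_comp_preimage hme (f := fun x => u x * (inner ℝ a x : ℝ))
      (s := Ω)).2 hI1
    rw [hpre] at this
    refine this.neg.congr (Filter.Eventually.of_forall fun x => ?_)
    change -(u (reflH a x) * (inner ℝ a (reflH a x) : ℝ)) = u (reflH a x) * (inner ℝ a x : ℝ)
    rw [inner_reflH ha]
    ring
  have hI3 : IntegrableOn (fun x : Euc 2 => (u x - u (reflH a x)) * (inner ℝ a x : ℝ)) Ω := by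
    simp only [sub_mul]
    exact hI1.sub hI2
  have htot : ∫ x in Ω, (u x - u (reflH a x)) * (inner ℝ a x : ℝ) =
      2 * (inner ℝ a (∫ x in Ω, u x • x) : ℝ) := by
    simp only [sub_mul]
    rw [integral_sub hI1 hI2, hsub, hX]
    ring
  have hnn : 0 ≤ᵐ[volume.restrict Ω] fun x => (u x - u (reflH a x)) * (inner ℝ a x : ℝ) := by
    filter_upwards [ae_restrict_mem hΩo.measurableSet] with x hx
    exact hG x hx
  constructor
  · have := integral_nonneg_of_ae hnn
    linarith
  · intro h0
    rw [h0, mul_zero] at htot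
    have hae := (setIntegral_eq_zero_iff_of_nonneg_ae hnn hI3).1 htot
    have huΩ : ContinuousOn u Ω := huc.mono subset_closure
    have hcr : ContinuousOn (fun x => u (reflH a x)) Ω :=
      huΩ.comp (reflH_continuous a).continuousOn fun x hx => hΩr x _ (norm_reflH ha x).symm hx
    have := Measure.eqOn_open_of_ae_eq hae hΩo ((huΩ.sub hcr).mul hinn.continuousOn)
      continuousOn_const
    exact fun x hx => this hx

/-- Lemma 4.7 of the paper. -/
theorem foliated_schwarz_of_polarizations_solve
    (Ω : Set (Euc 2)) (hΩ : RadialDomain Ω) (k : ℕ) (hk : 1 ≤ k)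
    (beta : ℝ) (hbeta : beta < 0)
    (u : Euc 2 → ℝ)
    (hreg : ContDiffOn ℝ 2 u Ω ∧ ContDiffOn ℝ 1 u (closure Ω))
    (heq : ∀ x ∈ Ω, -(lapk k u x) + u x = (u x) ^ 3 + beta * u x * (u (-x)) ^ 2)
    (hpol : ∀ a : Euc 2, ‖a‖ = 1 →
      (ContDiffOn ℝ 2 (polr a u) Ω ∧ ContDiffOn ℝ 1 (polr a u) (closure Ω)) ∧
      ∀ x ∈ Ω, -(lapk k (polr a u) x) + polr a u x =
        (polr a u x) ^ 3 + beta * polr a u x * (polr a u (-x)) ^ 2) :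
    ∃ e : Euc 2, FoliatedSchwarz Ω u e := by
  obtain ⟨hΩo, hΩc, hΩr, r, R, hr, hrR⟩ := dom_facts hΩ
  have hucl : ContinuousOn u (closure Ω) := hreg.2.continuousOn
  obtain ⟨M, hM⟩ := hΩc.exists_bound_of_continuousOn hucl
  have hdich : ∀ a : Euc 2, ‖a‖ = 1 →
      (∀ x ∈ Ω, 0 < (inner ℝ a x : ℝ) → u (reflH a x) ≤ u x) ∨
      (∀ x ∈ Ω, 0 < (inner ℝ a x : ℝ) → u x ≤ u (reflH a x)) := fun a ha =>
    dichotomy hΩo hΩr hr hrR hk hbeta hreg.1 heq (fun a ha => (hpol a ha).1.1)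
      (fun a ha => (hpol a ha).2) (M := M) (fun x hx => hM x (subset_closure hx)) ha
  set X : Euc 2 := ∫ x in Ω, u x • x with hX
  -- the sign of `⟪a, X⟫` decides which alternative holds
  have key : ∀ a : Euc 2, ‖a‖ = 1 → 0 ≤ (inner ℝ a X : ℝ) → ∀ x ∈ Ω,
      0 < (inner ℝ a x : ℝ) → u (reflH a x) ≤ u x := by
    intro a ha haX
    rcases hdich a ha with h | h
    · exact h
    · have ha' : ‖-a‖ = 1 := by rwa [norm_neg]
      have hG : ∀ x ∈ Ω, 0 ≤ (u x - u (reflH (-a) x)) * (inner ℝ (-a) x : ℝ) := by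
        intro x hx
        rw [reflH_neg_left, inner_neg_left]
        rcases lt_trichotomy (inner ℝ a x : ℝ) 0 with hlt | h0 | hgt
        · have h1 := h (reflH a x) (hΩr x _ (norm_reflH ha x).symm hx)
            (by rw [inner_reflH ha]; linarith)
          rw [reflH_reflH ha] at h1
          exact mul_nonneg (by linarith) (by linarith)
        · rw [h0]; simp
        · have h1 := h x hx hgt
          exact mul_nonneg_of_nonpos_of_nonpos (by linarith) (by linarith)
      obtain ⟨g1, g2⟩ := axis_sign hΩo hΩc hΩr hucl ha' hG
      rw [← hX, inner_neg_left] at g1 g2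
      intro x hx hax
      have h3 := g2 (by linarith) x hx
      rw [reflH_neg_left, inner_neg_left] at h3
      rcases mul_eq_zero.1 h3 with h4 | h4
      · linarith
      · linarith
  have main : ∀ e : Euc 2, ‖e‖ = 1 → (∃ c : ℝ, 0 ≤ c ∧ X = c • e) → FoliatedSchwarz Ω u e := by
    rintro e he ⟨c, hc, hXe⟩
    refine ⟨he, fun x hx y hy hxy hle => ?_⟩
    by_cases hne : x = y
    · rw [hne]
    obtain ⟨a, d, hd, had, ha, hax, hswap⟩ := exists_refl_swap hxy hne
    have haX : 0 ≤ (inner ℝ a X : ℝ) := by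
      rw [hXe, had, inner_smul_left, inner_smul_right, inner_sub_left, real_inner_comm e x,
        real_inner_comm e y]
      simp only [conj_trivial]
      exact mul_nonneg hd.le (mul_nonneg hc (by linarith))
    have := key a ha haX x hx hax
    rwa [hswap] at this
  by_cases hX0 : X = 0
  · refine ⟨EuclideanSpace.single 0 1, main _ (by simp) ⟨0, le_rfl, ?_⟩⟩
    rw [hX0, zero_smul]
  · have hn : 0 < ‖X‖ := norm_pos_iff.2 hX0
    refine ⟨‖X‖⁻¹ • X, main _ ?_ ⟨‖X‖, hn.le, ?_⟩⟩
    · rw [norm_smul, norm_inv, norm_norm]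
      field_simp
    · rw [smul_smul, mul_inv_cancel₀ hn.ne', one_smul]

end
end
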